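/- Let m = 1 and suppose f is a probability density on ℝ with finite second moment ∫ x² f(x) dx < ∞. Assume that for every σ > 0, p is differentiable at σ with p'(σ) = ∫∫ min{f(y)/f(x), 1} (∂g(y|x,σ)/∂σ) f(x) dy dx, and p(σ) > 0 for all σ > 0. Then -σ·p'(σ)/p(σ) → 1 as σ → ∞; equivalently, writing c* = -1/p'(σ*) and p* = p(σ*), the ratio c*/σ* → 1/p* as σ* → ∞. (Proposition 2) -/

import Mathlib

open MeasureTheory Real

/-- `min{f(y)/f(x), 1}`, with the convention that this equals `1` when `f(x) = 0`. -/
noncomputable def accept {α : Type*} (f : α → ℝ) (x y : α) : ℝ :=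
  if f x = 0 then 1 else min (f y / f x) 1

/-!
Since `min {f y / f x, 1} * f x = min (f x) (f y)`, the acceptance probability on an `m`-dimensional
space is `σ ^ (-m)` times a constant times `M (-σ⁻²)`, where `M` is the moment generating function
of `‖y - x‖² / (2A)` under the overlap measure `min (f x) (f y) dx dy`. This measure is finite when
`f` has a finite `m`-th moment, because `{‖y‖ ≤ ‖x‖}` has volume proportional to `‖x‖ ^ m`. Then, by
dominated convergence, `M t → M 0 > 0` and `t * M' t → 0` as `t → 0⁻`, so the factor `M` contributes
nothing to `σ * p' σ / p σ` in the limit, and only the exponent `-m` is left.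
-/

section

open ProbabilityTheory Filter Module
open scoped Topology

section Mgf

lemma norm_exp_mul_le_one_of_nonpos_of_nonneg {t x : ℝ} (ht : t ≤ 0) (hx : 0 ≤ x) :
    ‖exp (t * x)‖ ≤ 1 := by
  rw [norm_of_nonneg (exp_pos _).le, exp_le_one_iff]
  exact mul_nonpos_of_nonpos_of_nonneg ht hx

variable {Ω : Type*} [MeasurableSpace Ω] {μ : Measure Ω} [IsFiniteMeasure μ] {X : Ω → ℝ}

lemma Iic_zero_subset_integrableExpSet (hX : AEMeasurable X μ) (hX0 : 0 ≤ᵐ[μ] X) :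
    Set.Iic 0 ⊆ integrableExpSet X μ := by
  intro t ht
  refine Integrable.of_bound (C := 1) (by fun_prop) ?_
  exact hX0.mono fun ω => norm_exp_mul_le_one_of_nonpos_of_nonneg ht

lemma mem_interior_integrableExpSet_of_neg (hX : AEMeasurable X μ) (hX0 : 0 ≤ᵐ[μ] X) {t : ℝ}
    (ht : t < 0) : t ∈ interior (integrableExpSet X μ) :=
  mem_interior_iff_mem_nhds.2 <|
    mem_of_superset (Iic_mem_nhds ht) (Iic_zero_subset_integrableExpSet hX hX0)

lemma tendsto_mgf_nhdsLT_zero (hX : AEMeasurable X μ) (hX0 : 0 ≤ᵐ[μ] X) :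
    Tendsto (mgf X μ) (𝓝[<] 0) (𝓝 (mgf X μ 0)) := by
  refine tendsto_integral_filter_of_dominated_convergence (fun _ => 1)
    (.of_forall fun t => by fun_prop) ?_ (integrable_const 1) (ae_of_all _ fun ω => ?_)
  · filter_upwards [self_mem_nhdsWithin] with t (ht : t < 0)
    exact hX0.mono fun ω => norm_exp_mul_le_one_of_nonpos_of_nonneg ht.le
  · exact (by fun_prop : Continuous fun t => exp (t * X ω)).continuousWithinAt

lemma tendsto_mul_deriv_mgf_nhdsLT_zero (hX : AEMeasurable X μ) (hX0 : 0 ≤ᵐ[μ] X) :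
    Tendsto (fun t => t * deriv (mgf X μ) t) (𝓝[<] 0) (𝓝 0) := by
  have hintegral : Tendsto (fun t => ∫ ω, t * (X ω * exp (t * X ω)) ∂μ) (𝓝[<] 0)
      (𝓝 (∫ _, 0 ∂μ)) := by
    refine tendsto_integral_filter_of_dominated_convergence (fun _ => exp (-1))
      (.of_forall fun t => by fun_prop) ?_ (integrable_const _) (ae_of_all _ fun ω => ?_)
    · filter_upwards [self_mem_nhdsWithin] with t (ht : t < 0)
      filter_upwards [hX0] with ω (hω : 0 ≤ X ω)
      calc ‖t * (X ω * exp (t * X ω))‖ = -(t * X ω) * exp (-(-(t * X ω))) := by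
            rw [← mul_assoc, norm_mul, norm_of_nonpos (mul_nonpos_of_nonpos_of_nonneg ht.le hω),
              norm_of_nonneg (exp_pos _).le, neg_neg]
        _ ≤ exp (-1) := mul_exp_neg_le_exp_neg_one _
    · have h : Continuous fun t => t * (X ω * exp (t * X ω)) := by fun_prop
      simpa using (h.tendsto 0).mono_left nhdsWithin_le_nhds
  rw [integral_zero] at hintegral
  refine hintegral.congr' ?_
  filter_upwards [self_mem_nhdsWithin] with t ht
  rw [integral_const_mul, deriv_mgf (mem_interior_integrableExpSet_of_neg hX hX0 ht)]

lemma tendsto_mul_logDeriv_mgf_nhdsLT_zero [NeZero μ] (hX : AEMeasurable X μ)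
    (hX0 : 0 ≤ᵐ[μ] X) : Tendsto (fun t => t * logDeriv (mgf X μ) t) (𝓝[<] 0) (𝓝 0) := by
  have h0 : mgf X μ 0 ≠ 0 :=
    (mgf_pos_iff.2 (Iic_zero_subset_integrableExpSet hX hX0 Set.self_mem_Iic)).ne'
  have hdiv := (tendsto_mul_deriv_mgf_nhdsLT_zero hX hX0).div (tendsto_mgf_nhdsLT_zero hX hX0) h0
  rw [zero_div] at hdiv
  exact hdiv.congr fun t => mul_div_assoc _ _ _

end Mgf

lemma tendsto_neg_inv_sq_atTop : Tendsto (fun σ : ℝ => -(σ ^ 2)⁻¹) atTop (𝓝[<] 0) := by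
  have hsq := tendsto_inv_atTop_nhdsGT_zero.comp (tendsto_pow_atTop (α := ℝ) two_ne_zero)
  exact neg_zero (G := ℝ) ▸ tendsto_neg_nhdsGT.comp hsq

lemma mul_logDeriv_const_mul_zpow_mul_comp_neg_inv_sq {M : ℝ → ℝ} {c σ : ℝ} (n : ℤ) (hc : c ≠ 0)
    (hσ : σ ≠ 0) (hM : DifferentiableAt ℝ M (-(σ ^ 2)⁻¹)) (hM0 : M (-(σ ^ 2)⁻¹) ≠ 0) :
    σ * logDeriv (fun s => c * (s ^ n * M (-(s ^ 2)⁻¹))) σ =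
      n - 2 * (-(σ ^ 2)⁻¹ * logDeriv M (-(σ ^ 2)⁻¹)) := by
  have hu : HasDerivAt (fun s : ℝ => -(s ^ 2)⁻¹) (2 * σ⁻¹ * (σ ^ 2)⁻¹) σ := by
    refine (((hasDerivAt_pow 2 σ).fun_inv (pow_ne_zero 2 hσ)).fun_neg).congr_deriv ?_
    simp only [Nat.cast_ofNat, Nat.add_one_sub_one, pow_one]
    field_simp
  have hcomp : logDeriv (fun s => M (-(s ^ 2)⁻¹)) σ =
      logDeriv M (-(σ ^ 2)⁻¹) * (2 * σ⁻¹ * (σ ^ 2)⁻¹) :=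
    hu.deriv ▸ logDeriv_comp hM hu.differentiableAt
  rw [logDeriv_const_mul σ c hc, logDeriv_mul (f := (· ^ n)) (g := fun s => M (-(s ^ 2)⁻¹)) σ
    (zpow_ne_zero n hσ) hM0 (differentiableAt_zpow.2 (.inl hσ)) (hM.comp σ hu.differentiableAt),
    logDeriv_zpow, hcomp]
  field_simp
  ring

section Overlap

lemma accept_mul_self {α : Type*} {f : α → ℝ} {x y : α} (hx : 0 ≤ f x) (hy : 0 ≤ f y) :
    accept f x y * f x = min (f x) (f y) := by
  rcases hx.eq_or_lt' with h | h
  · simp [h, hy]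
  · rw [accept, if_neg h.ne', min_mul_of_nonneg _ _ hx, div_mul_cancel₀ _ h.ne', one_mul, min_comm]

variable {α : Type*} [MeasurableSpace α] {μ : Measure α} {f : α → ℝ}

/-- The measure on pairs with density `min (f x) (f y)`. Weighted by the proposal
density, it is the joint law of a current state and an accepted proposal. -/
noncomputable def overlapMeasure (μ : Measure α) (f : α → ℝ) : Measure (α × α) :=
  (μ.prod μ).withDensity fun z => ENNReal.ofReal (min (f z.1) (f z.2))

lemma integral_overlapMeasure (hf0 : ∀ x, 0 ≤ f x)
    (hfo : AEMeasurable (fun z : α × α => min (f z.1) (f z.2)) (μ.prod μ)) (h : α × α → ℝ) :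
    ∫ z, h z ∂overlapMeasure μ f = ∫ z, min (f z.1) (f z.2) * h z ∂μ.prod μ := by
  rw [overlapMeasure, integral_withDensity_eq_integral_toReal_smul₀ hfo.ennreal_ofReal
    (ae_of_all _ fun _ => ENNReal.ofReal_lt_top)]
  simp only [ENNReal.toReal_ofReal (le_min (hf0 _) (hf0 _)), smul_eq_mul]

lemma isFiniteMeasure_overlapMeasure
    (hfo : Integrable (fun z : α × α => min (f z.1) (f z.2)) (μ.prod μ)) :
    IsFiniteMeasure (overlapMeasure μ f) :=
  isFiniteMeasure_withDensity_ofReal hfo.hasFiniteIntegral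

lemma overlapMeasure_ne_zero [SFinite μ] (hf0 : ∀ x, 0 ≤ f x) (hf : ∫ x, f x ∂μ ≠ 0)
    (hfo : AEMeasurable (fun z : α × α => min (f z.1) (f z.2)) (μ.prod μ)) :
    overlapMeasure μ f ≠ 0 := by
  intro h
  have hmin : ∀ᵐ z ∂μ.prod μ, ENNReal.ofReal (min (f z.1) (f z.2)) = 0 :=
    (withDensity_eq_zero_iff hfo.ennreal_ofReal).1 h
  have hprod : ∀ᵐ z ∂μ.prod μ, f z.1 * f z.2 = 0 := by
    filter_upwards [hmin] with z hz
    rcases min_le_iff.1 (ENNReal.ofReal_eq_zero.1 hz) with hz | hz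
    · rw [hz.antisymm (hf0 _), zero_mul]
    · rw [hz.antisymm (hf0 _), mul_zero]
  exact mul_ne_zero hf hf ((integral_prod_mul f f).symm.trans (integral_eq_zero_of_ae hprod))

end Overlap

section Moments

variable {E : Type*} [NormedAddCommGroup E] [MeasurableSpace E] {μ : Measure E} {f : E → ℝ}

lemma integrable_norm_pow_mul_of_le [OpensMeasurableSpace E] {k n : ℕ} (hkn : k ≤ n)
    (hf : Integrable f μ) (hn : Integrable (fun x => ‖x‖ ^ n * f x) μ) :
    Integrable (fun x => ‖x‖ ^ k * f x) μ := by
  refine (hf.norm.add hn.norm).mono' ((by fun_prop : Measurable fun x : E => ‖x‖ ^ k)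
    |>.aestronglyMeasurable.mul hf.aestronglyMeasurable) (ae_of_all _ fun x => ?_)
  have hpow : ‖x‖ ^ k ≤ 1 + ‖x‖ ^ n := by
    rcases le_total ‖x‖ 1 with h | h
    · linarith [pow_le_one₀ (n := k) (norm_nonneg x) h, pow_nonneg (norm_nonneg x) n]
    · linarith [pow_le_pow_right₀ h hkn]
  calc ‖‖x‖ ^ k * f x‖ = ‖x‖ ^ k * ‖f x‖ := by rw [norm_mul, norm_pow, norm_norm]
    _ ≤ (1 + ‖x‖ ^ n) * ‖f x‖ := by gcongr
    _ = ‖f x‖ + ‖‖x‖ ^ n * f x‖ := by rw [norm_mul, norm_pow, norm_norm, add_mul, one_mul]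

variable [NormedSpace ℝ E] [FiniteDimensional ℝ E] [BorelSpace E] [μ.IsAddHaarMeasure]

lemma integrable_indicator_norm_snd_le_norm_fst (hfm : AEStronglyMeasurable f μ)
    (hf : Integrable (fun x => ‖x‖ ^ finrank ℝ E * f x) μ) :
    Integrable ({z : E × E | ‖z.2‖ ≤ ‖z.1‖}.indicator fun z => f z.1) (μ.prod μ) := by
  have hS : MeasurableSet {z : E × E | ‖z.2‖ ≤ ‖z.1‖} :=
    measurableSet_le (by fun_prop) (by fun_prop)
  have hsection (x : E) :
      (fun y => {z : E × E | ‖z.2‖ ≤ ‖z.1‖}.indicator (fun z => f z.1) (x, y)) =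
        (Metric.closedBall 0 ‖x‖).indicator fun _ => f x := by
    ext y
    simp only [Set.indicator, Set.mem_ofPred_eq, mem_closedBall_zero_iff]
  refine (integrable_prod_iff (hfm.comp_fst.indicator hS)).2 ⟨ae_of_all _ fun x => ?_, ?_⟩
  · rw [hsection, integrable_indicator_iff measurableSet_closedBall]
    exact integrableOn_const measure_closedBall_lt_top.ne
  · refine (hf.norm.const_mul (μ.real (Metric.ball 0 1))).congr (ae_of_all _ fun x => ?_)
    have hnorm (y : E) : ‖{z : E × E | ‖z.2‖ ≤ ‖z.1‖}.indicator (fun z => f z.1) (x, y)‖ =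
        (Metric.closedBall 0 ‖x‖).indicator (fun _ => ‖f x‖) y := by
      rw [congrFun (hsection x) y, norm_indicator_eq_indicator_norm]
    simp only [hnorm]
    rw [integral_indicator_const _ measurableSet_closedBall,
      Measure.addHaar_real_closedBall μ 0 (norm_nonneg x), smul_eq_mul, norm_mul, norm_pow,
      norm_norm]
    ring

lemma integrable_min_of_integrable_norm_pow_finrank_mul (hf0 : ∀ x, 0 ≤ f x)
    (hfm : AEStronglyMeasurable f μ) (hf : Integrable (fun x => ‖x‖ ^ finrank ℝ E * f x) μ) :
    Integrable (fun z : E × E => min (f z.1) (f z.2)) (μ.prod μ) := by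
  have hfst := integrable_indicator_norm_snd_le_norm_fst hfm hf
  refine (hfst.add hfst.swap).mono' (hfm.comp_fst.inf hfm.comp_snd) (ae_of_all _ fun z => ?_)
  rw [norm_of_nonneg (le_min (hf0 _) (hf0 _))]
  have hind (w : E × E) : 0 ≤ {z : E × E | ‖z.2‖ ≤ ‖z.1‖}.indicator (fun z => f z.1) w :=
    Set.indicator_nonneg (fun z _ => hf0 z.1) w
  rcases le_total ‖z.2‖ ‖z.1‖ with h | h
  · refine (min_le_left _ _).trans (le_add_of_le_of_nonneg ?_ (hind z.swap))
    exact (Set.indicator_of_mem (s := {z : E × E | ‖z.2‖ ≤ ‖z.1‖}) h fun z => f z.1).ge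
  · refine (min_le_right _ _).trans (le_add_of_nonneg_of_le (hind z) ?_)
    exact (Set.indicator_of_mem (s := {z : E × E | ‖z.2‖ ≤ ‖z.1‖}) (a := z.swap) h
      fun z => f z.1).ge

end Moments

section ScaledSqDist

variable {E : Type*} [NormedAddCommGroup E] {A : ℝ}

/-- `‖y - x‖² / (2A)`, so that the Gaussian exponent at scale `σ` is this times `-σ⁻²`. -/
noncomputable def scaledSqDist (A : ℝ) (z : E × E) : ℝ :=
  ‖z.2 - z.1‖ ^ 2 / (2 * A)

lemma scaledSqDist_nonneg (hA : 0 ≤ A) (z : E × E) : 0 ≤ scaledSqDist A z := by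
  unfold scaledSqDist
  positivity

lemma measurable_scaledSqDist [MeasurableSpace E] [OpensMeasurableSpace E]
    [SecondCountableTopology E] : Measurable (scaledSqDist A : E × E → ℝ) := by
  refine Continuous.measurable ?_
  unfold scaledSqDist
  fun_prop

end ScaledSqDist

section AcceptanceProb

variable {E : Type*} [NormedAddCommGroup E] [InnerProductSpace ℝ E]

/-- The density at `y` of the isotropic Gaussian proposal with mean `x` and covariance `σ² A I`. -/
noncomputable def proposalDensity (A : ℝ) (x y : E) (σ : ℝ) : ℝ :=
  (2 * π * σ ^ 2) ^ (-(finrank ℝ E : ℝ) / 2) * A ^ (-(finrank ℝ E : ℝ) / 2) *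
    exp (-‖y - x‖ ^ 2 / (2 * A * σ ^ 2))

lemma proposalDensity_eq_mul_exp_scaledSqDist {A σ : ℝ} (hσ : 0 < σ) (x y : E) :
    proposalDensity A x y σ = (2 * π) ^ (-(finrank ℝ E : ℝ) / 2) * A ^ (-(finrank ℝ E : ℝ) / 2) *
      (σ ^ (-(finrank ℝ E : ℤ)) * exp (-(σ ^ 2)⁻¹ * scaledSqDist A (x, y))) := by
  have hpow : (σ ^ 2) ^ (-(finrank ℝ E : ℝ) / 2) = σ ^ (-(finrank ℝ E : ℤ)) := by
    rw [← rpow_natCast_mul hσ.le, ← rpow_intCast]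
    push_cast
    congr 1
    ring
  have hexp : -‖y - x‖ ^ 2 / (2 * A * σ ^ 2) = -(σ ^ 2)⁻¹ * scaledSqDist A (x, y) := by
    rw [scaledSqDist, neg_div, div_mul_eq_div_div, div_eq_mul_inv _ (σ ^ 2)]
    ring
  rw [proposalDensity, mul_rpow (by positivity) (by positivity), hpow, hexp]
  ring

variable [FiniteDimensional ℝ E] [MeasurableSpace E] [BorelSpace E] {A : ℝ} {f : E → ℝ}

/-- The overall acceptance probability of the Metropolis algorithm with target density `f` and
proposal `proposalDensity A`, as a function of the proposal scale `σ`. -/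
noncomputable def acceptanceProb (A : ℝ) (f : E → ℝ) (σ : ℝ) : ℝ :=
  ∫ x, ∫ y, accept f x y * proposalDensity A x y σ * f x

lemma acceptanceProb_eq_mgf {σ : ℝ} (hA : 0 < A) (hσ : 0 < σ) (hf0 : ∀ x, 0 ≤ f x)
    (hfo : Integrable fun z : E × E => min (f z.1) (f z.2)) :
    acceptanceProb A f σ = (2 * π) ^ (-(finrank ℝ E : ℝ) / 2) * A ^ (-(finrank ℝ E : ℝ) / 2) *
      (σ ^ (-(finrank ℝ E : ℤ)) *
        mgf (scaledSqDist A) (overlapMeasure volume f) (-(σ ^ 2)⁻¹)) := by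
  have hint : Integrable fun z : E × E =>
      min (f z.1) (f z.2) * exp (-(σ ^ 2)⁻¹ * scaledSqDist A z) := by
    refine hfo.mul_bdd (c := 1) (measurable_scaledSqDist.const_mul _).exp.aestronglyMeasurable
      (ae_of_all _ fun z => norm_exp_mul_le_one_of_nonpos_of_nonneg
        (neg_nonpos.2 (by positivity)) (scaledSqDist_nonneg hA.le z))
  rw [mgf, integral_overlapMeasure hf0 hfo.aemeasurable, ← integral_const_mul, ← integral_const_mul,
    integral_prod _ ((hint.const_mul _).const_mul _)]
  simp only [acceptanceProb, mul_right_comm (accept f _ _), accept_mul_self (hf0 _) (hf0 _),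
    proposalDensity_eq_mul_exp_scaledSqDist hσ]
  congr! 4
  ring

lemma mul_logDeriv_acceptanceProb {σ : ℝ} (hA : 0 < A) (hσ : 0 < σ) (hf0 : ∀ x, 0 ≤ f x)
    (hf : ∫ x, f x ≠ 0) (hfo : Integrable fun z : E × E => min (f z.1) (f z.2)) :
    σ * logDeriv (acceptanceProb A f) σ = -finrank ℝ E - 2 * (-(σ ^ 2)⁻¹ *
      logDeriv (mgf (scaledSqDist A) (overlapMeasure volume f)) (-(σ ^ 2)⁻¹)) := by
  have := isFiniteMeasure_overlapMeasure hfo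
  have : NeZero (overlapMeasure volume f) :=
    ⟨overlapMeasure_ne_zero hf0 hf hfo.aemeasurable⟩
  have hX : AEMeasurable (scaledSqDist A) (overlapMeasure volume f) :=
    measurable_scaledSqDist.aemeasurable
  have hX0 : 0 ≤ᵐ[overlapMeasure volume f] scaledSqDist A :=
    ae_of_all _ (scaledSqDist_nonneg hA.le)
  have ht : -(σ ^ 2)⁻¹ < 0 := neg_lt_zero.2 (by positivity)
  have hloc : acceptanceProb A f =ᶠ[𝓝 σ] fun s => _ :=
    (eventually_gt_nhds hσ).mono fun s hs => acceptanceProb_eq_mgf hA hs hf0 hfo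
  rw [(logDeriv_congr_nhds hloc).eq_of_nhds,
    mul_logDeriv_const_mul_zpow_mul_comp_neg_inv_sq _ (by positivity) hσ.ne'
      (differentiableAt_mgf (mem_interior_integrableExpSet_of_neg hX hX0 ht))
      (mgf_pos_iff.2 (Iic_zero_subset_integrableExpSet hX hX0 ht.le)).ne']
  push_cast
  rfl

theorem prop2_general (hA : 0 < A) (hf0 : ∀ x, 0 ≤ f x) (hf1 : ∫ x, f x = 1)
    (hfo : Integrable fun z : E × E => min (f z.1) (f z.2)) :
    Tendsto (fun σ => -σ * deriv (acceptanceProb A f) σ / acceptanceProb A f σ) atTop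
      (𝓝 (finrank ℝ E)) := by
  have hf : ∫ x, f x ≠ 0 := hf1 ▸ one_ne_zero
  have := isFiniteMeasure_overlapMeasure hfo
  have : NeZero (overlapMeasure volume f) := ⟨overlapMeasure_ne_zero hf0 hf hfo.aemeasurable⟩
  have hmgf := tendsto_mul_logDeriv_mgf_nhdsLT_zero (μ := overlapMeasure volume f)
    measurable_scaledSqDist.aemeasurable (ae_of_all _ (scaledSqDist_nonneg hA.le))
  have hlim := ((hmgf.comp tendsto_neg_inv_sq_atTop).const_mul 2).const_add (finrank ℝ E : ℝ)
  rw [mul_zero, add_zero] at hlim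
  refine hlim.congr' ?_
  filter_upwards [eventually_gt_atTop 0] with σ hσ
  have hσp := mul_logDeriv_acceptanceProb hA hσ hf0 hf hfo
  rw [logDeriv_apply] at hσp
  rw [Function.comp_apply]
  linear_combination hσp

end AcceptanceProb

end

/-- Proposition 2: for `m = 1`, a Gaussian proposal `N(x, σ²A)` and a target density `f`
with finite second moment, `-σ p'(σ)/p(σ) → 1` as `σ → ∞`
(equivalently, `c*/σ* = (-1/p'(σ*))/σ* → 1/p*` as `σ* → ∞`). -/
theorem prop2 (A : ℝ) (hA : 0 < A)
    (f : ℝ → ℝ) (hfm : Measurable f) (hf0 : ∀ x, 0 ≤ f x) (hf1 : ∫ x, f x = 1)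
    -- finite second moment `∫ x² f(x) dx < ∞`
    (hM : Integrable (fun x => x ^ 2 * f x))
    (g : ℝ → ℝ → ℝ → ℝ)
    (hg : ∀ x y σ : ℝ, g x y σ = (2 * π * σ ^ 2) ^ (-(1 : ℝ) / 2) * A ^ (-(1 : ℝ) / 2) *
        Real.exp (-(y - x) ^ 2 / (2 * A * σ ^ 2)))
    (p : ℝ → ℝ)
    (hp : ∀ σ : ℝ, p σ = ∫ x, ∫ y, accept f x y * g x y σ * f x)
    -- differentiation under the integral sign at every `σ > 0`
    (hderiv : ∀ σ : ℝ, 0 < σ →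
        HasDerivAt p (∫ x, ∫ y, accept f x y * deriv (g x y) σ * f x) σ)
    (hppos : ∀ σ : ℝ, 0 < σ → 0 < p σ) :
    Filter.Tendsto (fun σ => -σ * deriv p σ / p σ) Filter.atTop (nhds 1) := by
  have hfi : Integrable f := .of_integral_ne_zero (hf1 ▸ one_ne_zero)
  have hmoment : Integrable fun x => ‖x‖ ^ Module.finrank ℝ ℝ * f x :=
    integrable_norm_pow_mul_of_le (n := 2) (by simp) hfi (by simpa using hM)
  obtain rfl : p = acceptanceProb A f := by
    ext σ
    simp [hp, hg, acceptanceProb, proposalDensity]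
  simpa using prop2_general hA hf0 hf1
    (integrable_min_of_integrable_norm_pow_finrank_mul hf0 hfm.aestronglyMeasurable hmoment)
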